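/- Fix δ₀, ρ₀ ∈ (0,1), set α₀ = (1−ρ₀)(1−δ₀)²/ρ₀ and β₀ = (1−ρ₀)(1−δ₀)/ρ₀, and for n ≥ 3 define t_n = δ₀√(2(1−ρ₀)log n), c_n = √(2(1−ρ₀)log(n)/ρ₀) · (1 − δ₀ − (1/4)·log log n / log n), and ψ_n(s) = φ(s) · Φ((t_n − √ρ₀ s)/√(1−ρ₀))^n. Then there is a constant C > 0 depending only on (δ₀, ρ₀) such that for all sufficiently large n, ∫_{−c_n}^{0} ψ_n(s) ds ≤ C · n^{−α₀} · (log n)^{(β₀−1)/2}. -/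

import Mathlib

open MeasureTheory Real Filter

/-- The standard normal density `φ`. -/
noncomputable def stdNormalPDF (s : ℝ) : ℝ :=
  (Real.sqrt (2 * Real.pi))⁻¹ * Real.exp (-s ^ 2 / 2)

/-- The standard normal distribution function `Φ`. -/
noncomputable def stdNormalCDF (x : ℝ) : ℝ :=
  ∫ s in Set.Iic x, stdNormalPDF s

/-- `t_n = δ₀ √(2(1−ρ₀) log n)`. -/
noncomputable def tN (δ₀ ρ₀ : ℝ) (n : ℕ) : ℝ :=
  δ₀ * Real.sqrt (2 * (1 - ρ₀) * Real.log n)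

/-- `c_n = √(2(1−ρ₀)log(n)/ρ₀) · (1 − δ₀ − (1/4)·log log n / log n)`. -/
noncomputable def cN (δ₀ ρ₀ : ℝ) (n : ℕ) : ℝ :=
  Real.sqrt (2 * (1 - ρ₀) * Real.log n / ρ₀) *
    (1 - δ₀ - (1 / 4) * Real.log (Real.log n) / Real.log n)

/-- `ψ_n(s) = φ(s) · Φ((t_n − √ρ₀ s)/√(1−ρ₀))^n`. -/
noncomputable def psiN (δ₀ ρ₀ : ℝ) (n : ℕ) (s : ℝ) : ℝ :=
  stdNormalPDF s *
    stdNormalCDF ((tN δ₀ ρ₀ n - Real.sqrt ρ₀ * s) / Real.sqrt (1 - ρ₀)) ^ n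

lemma pdf_nonneg' (s : ℝ) : 0 ≤ stdNormalPDF s := by
  unfold stdNormalPDF; positivity

lemma pdf_eq (s : ℝ) : stdNormalPDF s = ProbabilityTheory.gaussianPDFReal 0 1 s := by
  simp [stdNormalPDF, ProbabilityTheory.gaussianPDFReal]

lemma pdf_integrable : Integrable stdNormalPDF := by
  have h : stdNormalPDF = ProbabilityTheory.gaussianPDFReal 0 1 := funext pdf_eq
  rw [h]; exact ProbabilityTheory.integrable_gaussianPDFReal 0 1

lemma pdf_integral : ∫ s, stdNormalPDF s = 1 := by
  have h : stdNormalPDF = ProbabilityTheory.gaussianPDFReal 0 1 := funext pdf_eq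
  rw [h]; exact ProbabilityTheory.integral_gaussianPDFReal_eq_one 0 one_ne_zero

lemma cdf_nonneg' (x : ℝ) : 0 ≤ stdNormalCDF x :=
  setIntegral_nonneg measurableSet_Iic fun s _ => pdf_nonneg' s

lemma pdf_anti {a b : ℝ} (ha : 0 ≤ a) (hab : a ≤ b) : stdNormalPDF b ≤ stdNormalPDF a := by
  unfold stdNormalPDF
  have : a ^ 2 ≤ b ^ 2 := by gcongr
  gcongr

lemma cdf_le (x h : ℝ) (hx : 0 ≤ x) (hh : 0 ≤ h) :
    stdNormalCDF x ≤ 1 - h * stdNormalPDF (x + h) := by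
  have h1 : stdNormalCDF x + ∫ s in Set.Ioi x, stdNormalPDF s = 1 := by
    rw [← pdf_integral]
    have := integral_add_compl (μ := volume) (f := stdNormalPDF) (s := Set.Iic x)
      measurableSet_Iic pdf_integrable
    rw [Set.compl_Iic] at this
    exact this
  have h2 : ∫ s in Set.Ioc x (x + h), stdNormalPDF s ≤ ∫ s in Set.Ioi x, stdNormalPDF s := by
    apply setIntegral_mono_set pdf_integrable.integrableOn
    · exact Eventually.of_forall pdf_nonneg'
    · exact (Set.Ioc_subset_Ioi_self).eventuallyLE
  have h3 : ∫ s in Set.Ioc x (x + h), stdNormalPDF (x + h)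
      ≤ ∫ s in Set.Ioc x (x + h), stdNormalPDF s := by
    apply setIntegral_mono_on
    · exact integrableOn_const (by simp)
    · exact pdf_integrable.integrableOn
    · exact measurableSet_Ioc
    · intro s hs
      exact pdf_anti (hx.trans hs.1.le) hs.2
  rw [setIntegral_const] at h3
  simp [hh, Measure.real] at h3
  linarith

lemma cdf_le' (x : ℝ) (hx : 0 ≤ x) :
    stdNormalCDF x ≤ 1 - (1 + x)⁻¹ * (exp (-(3/2)) * stdNormalPDF x) := by
  have h := cdf_le x (1 + x)⁻¹ hx (by positivity)
  refine h.trans ?_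
  gcongr
  unfold stdNormalPDF
  rw [mul_left_comm, ← Real.exp_add]
  gcongr
  have h1 : (1 + x)⁻¹ ≤ 1 := inv_le_one_of_one_le₀ (by linarith)
  have h0 : 0 < (1 + x)⁻¹ := by positivity
  have h2 : x * (1 + x)⁻¹ ≤ 1 := by
    rw [← div_eq_mul_inv, div_le_one (by positivity)]; linarith
  nlinarith

lemma cdf_pow_le (n : ℕ) (x q : ℝ) (h : stdNormalCDF x ≤ 1 - q) :
    stdNormalCDF x ^ n ≤ exp (-(n * q)) := by
  calc stdNormalCDF x ^ n ≤ (exp (-q)) ^ n := by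
        apply pow_le_pow_left₀ (cdf_nonneg' x)
        linarith [Real.add_one_le_exp (-q)]
    _ = _ := by rw [← Real.exp_nat_mul]; ring_nf

lemma exp_neg_le (m : ℕ) (K z : ℝ) (hK : 0 < K) :
    exp (-(K * exp z)) ≤ m.factorial / K ^ m * exp (-(m * z)) := by
  have h := Real.pow_div_factorial_le_exp (K * exp z) (by positivity) m
  rw [Real.exp_neg, Real.exp_neg]
  have h2 : (m.factorial : ℝ) / K ^ m * (exp (m * z))⁻¹
      = ((K * exp z) ^ m / m.factorial)⁻¹ := by
    rw [mul_pow, ← Real.exp_nat_mul]; field_simp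
  rw [h2]
  gcongr

/-- the constant `K` -/
noncomputable def KK : ℝ := exp (-(5/2)) / (3 * Real.sqrt (2 * Real.pi))

lemma KK_pos : 0 < KK := by unfold KK; positivity

/-- tail lower bound, `x = T(1-v) - r` -/
lemma tail_bound (n : ℕ) (L v x : ℝ) (hn : 0 < n) (hL : L = Real.log n) (hL1 : 1 ≤ L)
    (hv : v = Real.log L / (4 * L)) (hv2 : v ≤ 1 / 2) (r : ℝ) (hr : 0 ≤ r)
    (hx : x = Real.sqrt (2 * L) * (1 - v) - r) (hx0 : 0 ≤ x) :
    KK * exp (Real.sqrt (2 * L) * r / 4)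
      ≤ n * ((1 + x)⁻¹ * (exp (-(3/2)) * stdNormalPDF x)) := by
  set T := Real.sqrt (2 * L) with hT
  have hT2 : T ^ 2 = 2 * L := Real.sq_sqrt (by linarith)
  have hT0 : 0 ≤ T := Real.sqrt_nonneg _
  have hl0 : 0 ≤ Real.log L := Real.log_nonneg hL1
  have hv0 : 0 ≤ v := by rw [hv]; positivity
  have hLv : 4 * (L * v) = Real.log L := by rw [hv]; field_simp
  set y := Real.sqrt L with hy
  have hy2 : y ^ 2 = L := Real.sq_sqrt (by linarith)
  have hy1 : 1 ≤ y := Real.one_le_sqrt.2 hL1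
  have hly : Real.log L = 2 * Real.log y := by
    rw [← hy2, Real.log_pow]; norm_num
  have hlogy : Real.log y ≤ y := (Real.log_le_sub_one_of_pos (by linarith)).trans (by linarith)
  have hlogy0 : 0 ≤ Real.log y := Real.log_nonneg hy1
  have hLv2 : L * v ^ 2 ≤ 1 := by
    have : v = Real.log y / (2 * L) := by rw [hv, hly]; field_simp; ring
    rw [this, div_pow, mul_div_assoc', div_le_one (by positivity)]
    have : Real.log y ^ 2 ≤ L := by rw [← hy2]; gcongr
    nlinarith
  have hTy : T ≤ 2 * y := by
    apply abs_le_of_sq_le_sq' _ (by positivity) |>.2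
    nlinarith
  have hx1 : 1 + x ≤ 3 * y := by nlinarith
  have hn' : (0:ℝ) < n := by exact_mod_cast hn
  have hnexp : (n : ℝ) = exp L := by rw [hL, Real.exp_log hn']
  have hyexp : y = exp (2 * (L * v)) := by
    rw [show 2 * (L * v) = Real.log y by linarith, Real.exp_log (by linarith)]
  have hxsq : -x ^ 2 / 2 ≥ -L + 2 * (L * v) - 1 + T * r / 4 := by
    have h1 : x ^ 2 = 2 * L * (1 - v) ^ 2 - 2 * (T * (1 - v)) * r + r ^ 2 := by
      rw [hx, ← hT2]; ring
    have h2 : r ^ 2 ≤ T * (1 - v) * r := by nlinarith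
    have h3 : T * (1/2) * r ≤ T * (1 - v) * r := by gcongr; linarith
    nlinarith
  calc KK * exp (T * r / 4)
      = exp L * ((3 * exp (2 * (L * v)))⁻¹ * (exp (-(3/2)) *
          ((Real.sqrt (2 * Real.pi))⁻¹ * exp (-L + 2 * (L * v) - 1 + T * r / 4)))) := by
        unfold KK
        have : exp (-L + 2 * (L * v) - 1 + T * r / 4)
          = (exp L)⁻¹ * exp (2 * (L * v)) * exp (-1) * exp (T * r / 4) := by
          rw [← Real.exp_neg, ← Real.exp_add, ← Real.exp_add, ← Real.exp_add]; ring_nf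
        rw [this, show (-(5/2) : ℝ) = -(3/2) + -1 by norm_num, Real.exp_add]
        field_simp
    _ ≤ _ := by
        rw [← hnexp, ← hyexp]
        unfold stdNormalPDF
        gcongr

lemma psi_nonneg' (δ₀ ρ₀ : ℝ) (n : ℕ) (s : ℝ) : 0 ≤ psiN δ₀ ρ₀ n s :=
  mul_nonneg (pdf_nonneg' s) (pow_nonneg (cdf_nonneg' _) n)

lemma integral_exp_bound (c T A : ℝ) (hc : 0 ≤ c) (hT : 0 < T) (hA : 0 ≤ A) (f : ℝ → ℝ)
    (hf0 : ∀ s, 0 ≤ f s) (hf : ∀ s, -c ≤ s → s ≤ 0 → f s ≤ A * exp (-(T * (c + s)))) :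
    ∫ s in (-c)..0, f s ≤ A / T := by
  have hcont : Continuous fun s : ℝ => A * exp (-(T * (c + s))) := by fun_prop
  have h1 : ∫ s in (-c)..0, f s ≤ ∫ s in (-c)..0, A * exp (-(T * (c + s))) := by
    rw [intervalIntegral.integral_of_le (by linarith), intervalIntegral.integral_of_le (by linarith)]
    apply integral_mono_of_nonneg
    · exact Eventually.of_forall hf0
    · exact (hcont.intervalIntegrable (-c) 0).1
    · filter_upwards [ae_restrict_mem measurableSet_Ioc] with s hs
      exact hf s hs.1.le hs.2
  refine h1.trans ?_
  have hd : ∀ s ∈ Set.uIcc (-c) 0, HasDerivAt (fun s => -(A / T) * exp (-(T * (c + s))))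
      (A * exp (-(T * (c + s)))) s := by
    intro s _
    have := (((((hasDerivAt_id s).const_add c).const_mul T).neg).exp).const_mul (-(A / T))
    refine this.congr_deriv ?_
    simp only [Pi.neg_apply, id]
    field_simp
  rw [intervalIntegral.integral_eq_sub_of_hasDerivAt hd (hcont.intervalIntegrable _ _)]
  have : 0 ≤ A / T * exp (-(T * (c + 0))) := by positivity
  simp at this ⊢
  linarith

theorem psi_integral_middle_interval_upper_bound (δ₀ ρ₀ : ℝ)
    (hδ : δ₀ ∈ Set.Ioo (0 : ℝ) 1) (hρ : ρ₀ ∈ Set.Ioo (0 : ℝ) 1) :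
    ∃ C : ℝ, 0 < C ∧
      ∀ᶠ n : ℕ in atTop,
        ∫ s in (-(cN δ₀ ρ₀ n))..0, psiN δ₀ ρ₀ n s
          ≤ C * (n : ℝ) ^ (-((1 - ρ₀) * (1 - δ₀) ^ 2 / ρ₀))
              * Real.log n ^ (((1 - ρ₀) * (1 - δ₀) / ρ₀ - 1) / 2) := by
  obtain ⟨hδ0, hδ1⟩ := hδ
  obtain ⟨hρ0, hρ1⟩ := hρ
  have hρ1' : 0 < 1 - ρ₀ := by linarith
  have hδ1' : 0 < 1 - δ₀ := by linarith
  obtain ⟨κ, hκ⟩ : ∃ κ, κ = Real.sqrt ρ₀ / Real.sqrt (1 - ρ₀) := ⟨_, rfl⟩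
  have hκ0 : 0 < κ := by
    rw [hκ]; exact div_pos (Real.sqrt_pos.2 hρ0) (Real.sqrt_pos.2 hρ1')
  obtain ⟨m, hm⟩ := exists_nat_ge (4 / κ * (1 / κ + 1))
  have hm' : 1 / κ + 1 ≤ m * κ / 4 := by
    have : 1 / κ + 1 = (4 / κ * (1 / κ + 1)) * κ / 4 := by field_simp
    rw [this]; gcongr
  refine ⟨m.factorial / KK ^ m, div_pos (by positivity) (pow_pos KK_pos m), ?_⟩
  have hlogT : Tendsto (fun n : ℕ => Real.log (n : ℝ)) atTop atTop :=
    Real.tendsto_log_atTop.comp tendsto_natCast_atTop_atTop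
  have hlo : Tendsto (fun x : ℝ => Real.log x / x) atTop (nhds 0) :=
    Real.isLittleO_log_id_atTop.tendsto_div_nhds_zero
  have hlo' := hlo.comp hlogT
  filter_upwards [hlogT.eventually_ge_atTop 1, eventually_gt_atTop 0,
    hlo'.eventually_le_const (show (0:ℝ) < min 2 (1 - δ₀) by positivity)] with n hL1 hn hmin
  obtain ⟨L, hL⟩ : ∃ L, L = Real.log (n : ℝ) := ⟨_, rfl⟩
  simp only [Function.comp] at hmin
  rw [← hL] at hL1 hmin
  obtain ⟨v, hv⟩ : ∃ v, v = Real.log L / (4 * L) := ⟨_, rfl⟩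
  have hv4 : Real.log L / L = 4 * v := by rw [hv]; field_simp
  have hl0 : 0 ≤ Real.log L := Real.log_nonneg hL1
  have hv0 : 0 ≤ v := by rw [hv]; positivity
  rw [hv4, le_min_iff] at hmin
  obtain ⟨T, hT⟩ : ∃ T, T = Real.sqrt (2 * L) := ⟨_, rfl⟩
  have hT0 : 0 < T := by rw [hT]; positivity
  have hT2 : T ^ 2 = 2 * L := by rw [hT]; exact Real.sq_sqrt (by linarith)
  have hκ2 : κ ^ 2 = ρ₀ / (1 - ρ₀) := by
    rw [hκ, div_pow, Real.sq_sqrt hρ0.le, Real.sq_sqrt hρ1'.le]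
  have hR : Real.sqrt (2 * (1 - ρ₀) * L / ρ₀) = T / κ := by
    rw [Real.sqrt_eq_iff_eq_sq (by positivity) (by positivity), div_pow, hT2, hκ2]
    field_simp
  obtain ⟨c, hc⟩ : ∃ c, c = T / κ * (1 - δ₀ - v) := ⟨_, rfl⟩
  have hcN : cN δ₀ ρ₀ n = c := by
    unfold cN
    rw [← hL, hR, hc, hv]; congr 2; field_simp
  have hc0 : 0 ≤ c := by
    rw [hc]; apply mul_nonneg (by positivity); linarith
  have hcR : c ≤ T / κ := by
    rw [hc]; apply mul_le_of_le_one_right (by positivity); linarith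
  have harg : ∀ s, (tN δ₀ ρ₀ n - Real.sqrt ρ₀ * s) / Real.sqrt (1 - ρ₀) = δ₀ * T - κ * s := by
    intro s
    have : Real.sqrt (2 * (1 - ρ₀) * L) = T * Real.sqrt (1 - ρ₀) := by
      rw [hT, ← Real.sqrt_mul (by linarith)]; ring_nf
    have h1 : 0 < Real.sqrt (1 - ρ₀) := Real.sqrt_pos.2 hρ1'
    unfold tN
    rw [← hL, this, hκ]; field_simp
  rw [hcN]
  have hM : 0 < (m.factorial : ℝ) / KK ^ m := div_pos (by positivity) (pow_pos KK_pos m)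
  have hint := integral_exp_bound c T (m.factorial / KK ^ m * stdNormalPDF c) hc0 hT0
    (mul_nonneg hM.le (pdf_nonneg' c)) (psiN δ₀ ρ₀ n) (psi_nonneg' δ₀ ρ₀ n) (by
      intro s hs1 hs2
      unfold psiN
      rw [harg]
      have hr : 0 ≤ κ * (c + s) := mul_nonneg hκ0.le (by linarith)
      have hx0 : 0 ≤ δ₀ * T - κ * s := by nlinarith [mul_pos hδ0 hT0]
      have hx : δ₀ * T - κ * s = Real.sqrt (2 * L) * (1 - v) - κ * (c + s) := by
        rw [← hT, hc]; field_simp; ring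
      have h1 := tail_bound n L v (δ₀ * T - κ * s) hn hL hL1 hv (by linarith) (κ * (c + s)) hr hx hx0
      rw [← hT] at h1
      have h2 := cdf_pow_le n _ _ (cdf_le' _ hx0)
      have h3 := exp_neg_le m KK (T * (κ * (c + s)) / 4) KK_pos
      have h4 : stdNormalCDF (δ₀ * T - κ * s) ^ n
          ≤ m.factorial / KK ^ m * exp (-(m * (T * (κ * (c + s)) / 4))) := by
        refine h2.trans (le_trans ?_ h3)
        gcongr
      have h5 : stdNormalPDF s ≤ stdNormalPDF c * exp (c * (c + s)) := by
        unfold stdNormalPDF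
        rw [mul_assoc, ← Real.exp_add]
        gcongr
        nlinarith [sq_nonneg (c + s)]
      calc _ ≤ (stdNormalPDF c * exp (c * (c + s))) *
            (m.factorial / KK ^ m * exp (-(m * (T * (κ * (c + s)) / 4)))) :=
            mul_le_mul h5 h4 (pow_nonneg (cdf_nonneg' _) n)
              (mul_nonneg (pdf_nonneg' c) (exp_pos _).le)
        _ = m.factorial / KK ^ m * stdNormalPDF c *
            exp (c * (c + s) + -(m * (T * (κ * (c + s)) / 4))) := by
            rw [Real.exp_add]; ring
        _ ≤ _ := by
            apply mul_le_mul_of_nonneg_left _ (mul_nonneg hM.le (pdf_nonneg' c))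
            apply Real.exp_le_exp.2
            have hw : 0 ≤ c + s := by linarith
            have h6 : T / κ + T ≤ T * (m * κ / 4) := by
              calc T / κ + T = T * (1 / κ + 1) := by ring
                _ ≤ _ := by gcongr
            have h7 : 0 ≤ (T * (m * κ / 4) - T - c) * (c + s) :=
              mul_nonneg (by linarith) hw
            linarith)
  refine hint.trans ?_
  rw [mul_div_assoc, mul_assoc]
  apply mul_le_mul_of_nonneg_left _ hM.le
  rw [← hL]
  have hL0 : 0 < L := by linarith
  have hn' : (0:ℝ) < n := by exact_mod_cast hn
  rw [Real.rpow_def_of_pos hn', ← hL, Real.rpow_def_of_pos hL0, ← Real.exp_add]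
  have hTge : exp (Real.log L / 2) ≤ T := by
    rw [← Real.log_sqrt hL0.le, Real.exp_log (Real.sqrt_pos.2 hL0), hT]
    apply Real.sqrt_le_sqrt; linarith
  have hpi : (Real.sqrt (2 * Real.pi))⁻¹ ≤ 1 := by
    apply inv_le_one_of_one_le₀
    apply Real.one_le_sqrt.2
    linarith [Real.pi_gt_three]
  have hc2 : c ^ 2 = 2 * (L * ((1 - ρ₀) / ρ₀)) * (1 - δ₀ - v) ^ 2 := by
    rw [hc, mul_pow, div_pow, hT2, hκ2]; field_simp
  have hLv : Real.log L = 4 * (L * v) := by rw [hv]; field_simp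
  calc stdNormalPDF c / T ≤ exp (-c ^ 2 / 2) / exp (Real.log L / 2) := by
        unfold stdNormalPDF
        gcongr
        exact mul_le_of_le_one_left (exp_pos _).le hpi
    _ = exp (-c ^ 2 / 2 - Real.log L / 2) := by rw [Real.exp_sub]
    _ ≤ _ := by
        apply Real.exp_le_exp.2
        rw [hc2, hLv]
        have : 0 ≤ (L * ((1 - ρ₀) / ρ₀)) * v ^ 2 := by positivity
        have e : L * -((1 - ρ₀) * (1 - δ₀) ^ 2 / ρ₀)
            + 4 * (L * v) * (((1 - ρ₀) * (1 - δ₀) / ρ₀ - 1) / 2)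
            = -(2 * (L * ((1 - ρ₀) / ρ₀)) * (1 - δ₀ - v) ^ 2) / 2 - 4 * (L * v) / 2
              + (L * ((1 - ρ₀) / ρ₀)) * v ^ 2 := by ring
        rw [e]; linarith
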